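/- The subgroup Ī of GL(2,ℂ) generated by the matrices α, β, γ is a finite group isomorphic to SL(2,5) (the special linear group of 2×2 matrices over the field with 5 elements); in particular Ī has order 120. -/

import Mathlib

noncomputable section
open Matrix

def zeta5 : ℂ := Complex.exp (2 * Real.pi * Complex.I / 5)

def alpha : Matrix (Fin 2) (Fin 2) ℂ := -(Matrix.of ![![zeta5 ^ 3, 0], ![0, zeta5 ^ 2]])
def beta : Matrix (Fin 2) (Fin 2) ℂ := Matrix.of ![![0, 1], ![-1, 0]]
def gamma : Matrix (Fin 2) (Fin 2) ℂ :=
  (zeta5 ^ 2 - zeta5 ^ 3)⁻¹ •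
    Matrix.of ![![zeta5 + zeta5⁻¹, 1], ![1, -(zeta5 + zeta5⁻¹)]]

def Ibar : Subgroup (GL (Fin 2) ℂ) :=
  Subgroup.closure {g : GL (Fin 2) ℂ |
    (g : Matrix (Fin 2) (Fin 2) ℂ) = alpha ∨ (g : Matrix (Fin 2) (Fin 2) ℂ) = beta ∨
      (g : Matrix (Fin 2) (Fin 2) ℂ) = gamma}

/-!
The group `Ibar` is the image of the odd part of the Weil representation of `SL₂(𝔽₅)`. For a finite
field `F` with `q` elements, `q` odd, `SL₂(F)` acts on functions on `F`: upper unipotent elements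
multiply by quadratic phases `ψ(b x²)` and the Weyl element is a Fourier transform, divided by a
Gauss sum. These elements generate `SL₂(F)`, so multiplicativity is only to be checked for a product
with one of them on the left, where it comes down to evaluating quadratic Gauss sums. The action
commutes with `x ↦ -x`, hence restricts to the odd functions, a space of dimension `(q - 1) / 2`.
For `q = 5` this dimension is two, the representation is faithful because `ψ` is injective and `-1`
is a square, and `α`, `β` and `γ` are the images of three generators of `SL₂(𝔽₅)`.
-/

section Generation

open Matrix.SpecialLinearGroup
open scoped MatrixGroups

variable {R : Type*} [CommRing R]

variable (R) in
/-- The Weyl element of `SL₂`, which together with the upper unipotent elements generates `SL₂` of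
a field. -/
def weyl : SL(2, R) := ⟨!![0, -1; 1, 0], by simp [det_fin_two_of]⟩

lemma coe_weyl : (weyl R : Matrix (Fin 2) (Fin 2) R) = !![0, -1; 1, 0] := rfl

lemma weyl_mul_apply_zero (g : SL(2, R)) (j : Fin 2) : (weyl R * g) 0 j = -g 1 j := by
  simp [coe_weyl, mul_apply, Fin.sum_univ_two]

lemma weyl_mul_apply_one (g : SL(2, R)) (j : Fin 2) : (weyl R * g) 1 j = g 0 j := by
  simp [coe_weyl, mul_apply, Fin.sum_univ_two]

/-- The upper unipotent element of `SL₂` with off-diagonal entry `b`. -/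
def upperUnipotent (b : R) : SL(2, R) :=
  ⟨!![1, b; 0, 1], by simp [det_fin_two_of]⟩

lemma coe_upperUnipotent (b : R) :
    (upperUnipotent b : Matrix (Fin 2) (Fin 2) R) = !![1, b; 0, 1] := rfl

lemma upperUnipotent_mul_apply_zero (b : R) (g : SL(2, R)) (j : Fin 2) :
    (upperUnipotent b * g) 0 j = g 0 j + b * g 1 j := by
  simp [coe_upperUnipotent, mul_apply, Fin.sum_univ_two]

lemma upperUnipotent_mul_apply_one (b : R) (g : SL(2, R)) (j : Fin 2) :
    (upperUnipotent b * g) 1 j = g 1 j := by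
  simp [coe_upperUnipotent, mul_apply, Fin.sum_univ_two]

lemma transvection_zero_one_eq_upperUnipotent (b : R) :
    transvection zero_ne_one b = upperUnipotent b := by
  ext i j
  rw [coe_upperUnipotent, transvection_coe]
  fin_cases i <;> fin_cases j <;> simp

-- The cube of the Weyl element is its inverse; only products are allowed in the induction below.
lemma transvection_one_zero_eq_conj (c : R) :
    transvection one_ne_zero c = weyl R * upperUnipotent (-c) * weyl R ^ 3 := by
  ext i j
  simp only [coe_mul, coe_pow, coe_weyl, coe_upperUnipotent, transvection_coe, pow_succ]
  fin_cases i <;> fin_cases j <;> simp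

theorem upperUnipotent_weyl_induction {F : Type*} [Field F] {P : SL(2, F) → Prop}
    (upperUnipotent : ∀ b, P (upperUnipotent b)) (weyl : P (weyl F))
    (mul : ∀ g h, P g → P h → P (g * h)) (g : SL(2, F)) : P g := by
  refine SL2.transvection_induction P (fun i j hij c ↦ ?_) mul g
  obtain ⟨rfl, rfl⟩ | ⟨rfl, rfl⟩ : i = 0 ∧ j = 1 ∨ i = 1 ∧ j = 0 := by lia
  · rw [transvection_zero_one_eq_upperUnipotent]
    exact upperUnipotent c
  · rw [transvection_one_zero_eq_conj, pow_succ, sq]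
    exact mul _ _ (mul _ _ weyl (upperUnipotent _)) (mul _ _ (mul _ _ weyl weyl) weyl)

end Generation

section AddChar

lemma addChar_isPrimitive_of_injective {R M : Type*} [CommRing R] [CommMonoid M] {ψ : AddChar R M}
    (hψ : Function.Injective ψ) : ψ.IsPrimitive :=
  fun t ht hone ↦ ht (hψ (by simpa using DFunLike.congr_fun hone 1))

lemma addChar_ne_neg_one_of_injective {R K : Type*} [Ring R] [IsDomain R] [Ring K] [CharZero K]
    (hR : ringChar R ≠ 2) {ψ : AddChar R K} (hψ : Function.Injective ψ) (t : R) : ψ t ≠ -1 := by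
  intro ht
  have hdouble : ψ (2 * t) = ψ 0 := by
    rw [two_mul, AddChar.map_add_eq_mul, ht, AddChar.map_zero_eq_one, neg_mul_neg, one_mul]
  obtain rfl : t = 0 := by simpa [Ring.two_ne_zero hR] using hψ hdouble
  rw [AddChar.map_zero_eq_one, eq_neg_iff_add_eq_zero, one_add_one_eq_two] at ht
  exact two_ne_zero ht

end AddChar

section GaussSum

variable {F K : Type*} [Field F] [Fintype F] [DecidableEq F] [CommRing K]

variable (F K) in
/-- The quadratic character of `F`, with values in `K` instead of `ℤ` so that it can be multiplied
with additive characters `F → K`. -/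
def quadraticMulChar : MulChar F K := (quadraticChar F).ringHomComp (Int.castRingHom K)

lemma quadraticMulChar_apply (a : F) : quadraticMulChar F K a = (quadraticChar F a : K) := rfl

lemma quadraticMulChar_isQuadratic : (quadraticMulChar F K).IsQuadratic :=
  (quadraticChar_isQuadratic F).comp _

lemma quadraticMulChar_ne_one [CharZero K] (hF : ringChar F ≠ 2) : quadraticMulChar F K ≠ 1 :=
  (MulChar.ringHomComp_ne_one_iff Int.cast_injective).2 (quadraticChar_ne_one hF)

lemma quadraticMulChar_mul_self {a : F} (ha : a ≠ 0) :
    quadraticMulChar F K a * quadraticMulChar F K a = 1 := by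
  rw [quadraticMulChar_apply, ← Int.cast_mul, ← sq, quadraticChar_sq_one ha, Int.cast_one]

lemma quadraticMulChar_neg_one (hF : IsSquare (-1 : F)) : quadraticMulChar F K (-1) = 1 := by
  rw [quadraticMulChar_apply, (quadraticChar_one_iff_isSquare (by simp)).2 hF, Int.cast_one]

theorem sum_comp_sq (hF : ringChar F ≠ 2) (f : F → K) :
    ∑ x, f (x ^ 2) = ∑ u, (quadraticMulChar F K u + 1) * f u := by
  rw [← Finset.sum_fiberwise (s := Finset.univ) (g := fun x : F ↦ x ^ 2)]
  refine Finset.sum_congr rfl fun u _ ↦ ?_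
  rw [Finset.sum_congr rfl fun x hx ↦ congrArg f (Finset.mem_filter.1 hx).2, Finset.sum_const,
    nsmul_eq_mul, quadraticMulChar_apply]
  have hcard := quadraticChar_card_sqrts hF u
  rw [Set.toFinset_ofPred] at hcard
  exact_mod_cast congrArg (fun n : ℤ ↦ (n : K) * f u) hcard

theorem sum_addChar_mul_sq [IsDomain K] (hF : ringChar F ≠ 2) {ψ : AddChar F K}
    (hψ : ψ.IsPrimitive) {t : F} (ht : t ≠ 0) :
    ∑ z, ψ (t * z ^ 2) = quadraticMulChar F K t * gaussSum (quadraticMulChar F K) ψ := by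
  have hsum : ∑ u, ψ (t * u) = 0 := AddChar.sum_eq_zero_of_ne_one (hψ ht)
  have hshift := gaussSum_mulShift_eq (quadraticMulChar F K) ψ (Units.mk0 t ht)
  rw [quadraticMulChar_isQuadratic.inv] at hshift
  rw [sum_comp_sq hF fun u ↦ ψ (t * u)]
  simp only [add_mul, one_mul, Finset.sum_add_distrib, hsum, add_zero]
  exact hshift

theorem sum_addChar_quadratic [IsDomain K] (hF : ringChar F ≠ 2) {ψ : AddChar F K}
    (hψ : ψ.IsPrimitive) {t : F} (ht : t ≠ 0) (s : F) :
    ∑ z, ψ (t * z ^ 2 - 2 * s * z) =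
      quadraticMulChar F K t * gaussSum (quadraticMulChar F K) ψ * ψ (-(s ^ 2 / t)) := by
  rw [← sum_addChar_mul_sq hF hψ ht, Finset.sum_mul, ← Equiv.sum_comp (Equiv.addRight (s / t))]
  refine Finset.sum_congr rfl fun z _ ↦ ?_
  rw [← AddChar.map_add_eq_mul, Equiv.coe_addRight]
  congr 1
  field_simp
  ring

lemma gaussSum_quadraticMulChar_ne_zero [CharZero K] [IsDomain K] (hF : ringChar F ≠ 2)
    {ψ : AddChar F K} (hψ : ψ.IsPrimitive) : gaussSum (quadraticMulChar F K) ψ ≠ 0 :=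
  gaussSum_ne_zero_of_nontrivial (Nat.cast_ne_zero.2 Fintype.card_ne_zero)
    (quadraticMulChar_ne_one hF) hψ

lemma inv_gaussSum_quadraticMulChar_sq_mul_card {K : Type*} [Field K] [CharZero K]
    (hF : ringChar F ≠ 2) {ψ : AddChar F K} (hψ : ψ.IsPrimitive) :
    (gaussSum (quadraticMulChar F K) ψ)⁻¹ ^ 2 * Fintype.card F = quadraticMulChar F K (-1) := by
  have hsq := gaussSum_sq (quadraticMulChar_ne_one hF) (quadraticMulChar_isQuadratic (K := K)) hψ
  have hcard : (Fintype.card F : K) ≠ 0 := Nat.cast_ne_zero.2 Fintype.card_ne_zero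
  rw [inv_pow, hsq, mul_inv, mul_assoc, inv_mul_cancel₀ hcard, mul_one]
  exact inv_eq_of_mul_eq_one_left (quadraticMulChar_mul_self (neg_ne_zero.2 one_ne_zero))

end GaussSum

section WeilRepresentation

open scoped MatrixGroups

variable {F K : Type*} [Field F] [Fintype F] [DecidableEq F] [Field K]

/-- The kernel of the operator by which `g = !![a, b; c, d]` acts on functions on `F` in the Weil
representation attached to `ψ`: `(g • f) x = ∑ y, weilMatrix ψ g x y * f y`. For `c = 0` the
operator is `f ↦ χ(a) ψ(a b x²) f(a x)`; for `c ≠ 0` it is a Fourier transform twisted by quadratic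
phases and normalised by the inverse of the quadratic Gauss sum. -/
def weilMatrix (ψ : AddChar F K) (g : SL(2, F)) : Matrix F F K :=
  of fun x y ↦
    if g 1 0 = 0 then
      if y = g 0 0 * x then quadraticMulChar F K (g 0 0) * ψ (g 0 0 * g 0 1 * x ^ 2) else 0
    else
      (gaussSum (quadraticMulChar F K) ψ)⁻¹ * quadraticMulChar F K (g 1 0) *
        ψ ((g 0 0 * x ^ 2 - 2 * x * y + g 1 1 * y ^ 2) / g 1 0)

variable (ψ : AddChar F K)

lemma weilMatrix_apply_of_eq_zero {g : SL(2, F)} (hg : g 1 0 = 0) (x y : F) :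
    weilMatrix ψ g x y =
      if y = g 0 0 * x then quadraticMulChar F K (g 0 0) * ψ (g 0 0 * g 0 1 * x ^ 2) else 0 :=
  if_pos hg

lemma weilMatrix_apply_of_ne_zero {g : SL(2, F)} (hg : g 1 0 ≠ 0) (x y : F) :
    weilMatrix ψ g x y = (gaussSum (quadraticMulChar F K) ψ)⁻¹ * quadraticMulChar F K (g 1 0) *
      ψ ((g 0 0 * x ^ 2 - 2 * x * y + g 1 1 * y ^ 2) / g 1 0) :=
  if_neg hg

lemma weilMatrix_neg_neg (g : SL(2, F)) (x y : F) :
    weilMatrix ψ g (-x) (-y) = weilMatrix ψ g x y := by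
  simp only [weilMatrix, of_apply, mul_neg, neg_mul, neg_neg, neg_inj, neg_sq]

lemma weilMatrix_one : weilMatrix ψ 1 = 1 := by
  ext x y
  simp [weilMatrix, Matrix.one_apply, eq_comm]

lemma weilMatrix_upperUnipotent_apply (b x y : F) :
    weilMatrix ψ (upperUnipotent b) x y = if y = x then ψ (b * x ^ 2) else 0 := by
  simp [weilMatrix, coe_upperUnipotent]

lemma weilMatrix_weyl_apply (x y : F) :
    weilMatrix ψ (weyl F) x y = (gaussSum (quadraticMulChar F K) ψ)⁻¹ * ψ (-(2 * x * y)) := by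
  simp [weilMatrix, coe_weyl]

theorem weilMatrix_upperUnipotent_mul (b : F) (g : SL(2, F)) :
    weilMatrix ψ (upperUnipotent b * g) = weilMatrix ψ (upperUnipotent b) * weilMatrix ψ g := by
  ext x y
  have hentries := upperUnipotent_mul_apply_zero b g
  have hentries' := upperUnipotent_mul_apply_one b g
  simp only [Matrix.mul_apply (M := weilMatrix ψ _), weilMatrix_upperUnipotent_apply, ite_mul,
    zero_mul, Finset.sum_ite_eq', Finset.mem_univ, if_true]
  by_cases hc : g 1 0 = 0
  · have hdet : g 0 0 * g 1 1 = 1 := by simpa [hc] using (det_fin_two (g : Matrix _ _ F)).symm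
    rw [weilMatrix_apply_of_eq_zero ψ (by rw [hentries', hc]), weilMatrix_apply_of_eq_zero ψ hc,
      hentries, hentries, hc, mul_ite, mul_zero, mul_zero, add_zero, mul_left_comm,
      ← AddChar.map_add_eq_mul]
    congr 4
    linear_combination b * x ^ 2 * hdet
  · rw [weilMatrix_apply_of_ne_zero ψ (by rwa [hentries']), weilMatrix_apply_of_ne_zero ψ hc,
      hentries, hentries', hentries', mul_left_comm, ← AddChar.map_add_eq_mul]
    congr 2
    field_simp
    ring

variable {ψ}

lemma weilMatrix_weyl_mul_of_one_zero_eq_zero {g : SL(2, F)} (hc : g 1 0 = 0) :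
    weilMatrix ψ (weyl F * g) = weilMatrix ψ (weyl F) * weilMatrix ψ g := by
  ext x y
  have hdet : g 0 0 * g 1 1 = 1 := by simpa [hc] using (det_fin_two (g : Matrix _ _ F)).symm
  have ha : g 0 0 ≠ 0 := left_ne_zero_of_mul_eq_one hdet
  have hy (z : F) : y = g 0 0 * z ↔ z = y / g 0 0 := by rw [eq_div_iff ha, eq_comm, mul_comm]
  simp only [Matrix.mul_apply (M := weilMatrix ψ _), weilMatrix_weyl_apply,
    weilMatrix_apply_of_eq_zero ψ hc, hy, mul_ite, mul_zero, Finset.sum_ite_eq', Finset.mem_univ,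
    if_true]
  rw [weilMatrix_apply_of_ne_zero ψ (by rwa [weyl_mul_apply_one])]
  simp only [weyl_mul_apply_zero, weyl_mul_apply_one, hc]
  rw [mul_mul_mul_comm, ← AddChar.map_add_eq_mul]
  congr 2
  field_simp
  ring

lemma weilMatrix_weyl_mul_apply_of_one_zero_ne_zero {g : SL(2, F)} (hc : g 1 0 ≠ 0) (x y : F) :
    (weilMatrix ψ (weyl F) * weilMatrix ψ g) x y =
      (gaussSum (quadraticMulChar F K) ψ)⁻¹ ^ 2 * quadraticMulChar F K (g 1 0) *
        ψ (g 1 1 * y ^ 2 / g 1 0) *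
          ∑ z, ψ (g 0 0 / g 1 0 * z ^ 2 - 2 * (x + y / g 1 0) * z) := by
  rw [Matrix.mul_apply, Finset.mul_sum]
  refine Finset.sum_congr rfl fun z _ ↦ ?_
  have hexp : -(2 * x * z) + (g 0 0 * z ^ 2 - 2 * z * y + g 1 1 * y ^ 2) / g 1 0 =
      g 1 1 * y ^ 2 / g 1 0 + (g 0 0 / g 1 0 * z ^ 2 - 2 * (x + y / g 1 0) * z) := by
    field_simp
    ring
  rw [weilMatrix_weyl_apply, weilMatrix_apply_of_ne_zero ψ hc, mul_mul_mul_comm,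
    ← AddChar.map_add_eq_mul, hexp, AddChar.map_add_eq_mul]
  ring

variable [CharZero K]

lemma weilMatrix_weyl_mul_of_zero_zero_eq_zero (hF : ringChar F ≠ 2) (hψ : ψ.IsPrimitive)
    {g : SL(2, F)} (ha : g 0 0 = 0) :
    weilMatrix ψ (weyl F * g) = weilMatrix ψ (weyl F) * weilMatrix ψ g := by
  ext x y
  have hc : g 1 0 ≠ 0 := fun hc ↦ by simpa [ha, hc] using det_fin_two (g : Matrix _ _ F)
  have hdelta : -2 * (x + y / g 1 0) = 0 ↔ y = -g 1 0 * x := by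
    rw [mul_eq_zero, neg_eq_zero, or_iff_right (Ring.two_ne_zero hF)]
    field_simp
    grind
  have hsum : ∑ z, ψ (g 0 0 / g 1 0 * z ^ 2 - 2 * (x + y / g 1 0) * z) =
      if y = -g 1 0 * x then (Fintype.card F : K) else 0 := by
    simp only [← hdelta]
    have hshift := AddChar.sum_mulShift (-2 * (x + y / g 1 0)) hψ
    push_cast at hshift
    rw [← hshift]
    refine Finset.sum_congr rfl fun z _ ↦ ?_
    rw [ha]
    ring_nf
  rw [weilMatrix_weyl_mul_apply_of_one_zero_ne_zero hc, hsum,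
    weilMatrix_apply_of_eq_zero ψ (by rwa [weyl_mul_apply_one])]
  simp only [weyl_mul_apply_zero, mul_ite, mul_zero]
  split_ifs with hy
  · have hexp : -g 1 0 * -g 1 1 * x ^ 2 = g 1 1 * y ^ 2 / g 1 0 := by
      rw [hy]
      field_simp
    rw [hexp, mul_right_comm, mul_right_comm _ _ (Fintype.card F : K),
      inv_gaussSum_quadraticMulChar_sq_mul_card hF hψ, ← map_mul, neg_one_mul]
  · rfl

lemma weilMatrix_weyl_mul_of_ne_zero (hF : ringChar F ≠ 2) (hψ : ψ.IsPrimitive) {g : SL(2, F)}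
    (ha : g 0 0 ≠ 0) (hc : g 1 0 ≠ 0) :
    weilMatrix ψ (weyl F * g) = weilMatrix ψ (weyl F) * weilMatrix ψ g := by
  ext x y
  have hdet : g 0 0 * g 1 1 - g 0 1 * g 1 0 = 1 := by
    rw [← det_fin_two, Matrix.SpecialLinearGroup.det_coe]
  have hG := gaussSum_quadraticMulChar_ne_zero hF hψ
  have hchar : quadraticMulChar F K (g 1 0) * quadraticMulChar F K (g 0 0 / g 1 0) =
      quadraticMulChar F K (g 0 0) := by
    rw [← map_mul, mul_div_cancel₀ _ hc]
  have hexp : (-g 1 0 * x ^ 2 - 2 * x * y + g 0 1 * y ^ 2) / g 0 0 =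
      g 1 1 * y ^ 2 / g 1 0 + -((x + y / g 1 0) ^ 2 / (g 0 0 / g 1 0)) := by
    field_simp
    linear_combination -y ^ 2 * hdet
  rw [weilMatrix_weyl_mul_apply_of_one_zero_ne_zero hc,
    sum_addChar_quadratic hF hψ (div_ne_zero ha hc),
    weilMatrix_apply_of_ne_zero ψ (by rwa [weyl_mul_apply_one])]
  simp only [weyl_mul_apply_zero, weyl_mul_apply_one]
  rw [hexp, AddChar.map_add_eq_mul, ← hchar]
  field_simp

theorem weilMatrix_mul (hF : ringChar F ≠ 2) (hψ : ψ.IsPrimitive) (g h : SL(2, F)) :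
    weilMatrix ψ (g * h) = weilMatrix ψ g * weilMatrix ψ h := by
  induction g using upperUnipotent_weyl_induction generalizing h with
  | upperUnipotent b => exact weilMatrix_upperUnipotent_mul ψ b h
  | weyl =>
    by_cases hc : h 1 0 = 0
    · exact weilMatrix_weyl_mul_of_one_zero_eq_zero hc
    by_cases ha : h 0 0 = 0
    · exact weilMatrix_weyl_mul_of_zero_zero_eq_zero hF hψ ha
    · exact weilMatrix_weyl_mul_of_ne_zero hF hψ ha hc
  | mul g₁ g₂ ih₁ ih₂ => rw [mul_assoc, ih₁, ih₂, ih₁, Matrix.mul_assoc]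

/-- The Weil representation of `SL₂(F)` attached to a primitive additive character of `F`, as a
homomorphism into the matrices indexed by `F`. -/
def weilRepresentation (hF : ringChar F ≠ 2) (hψ : ψ.IsPrimitive) : SL(2, F) →* Matrix F F K where
  toFun := weilMatrix ψ
  map_one' := weilMatrix_one ψ
  map_mul' := weilMatrix_mul hF hψ

end WeilRepresentation

section OddPart

variable {ι F K : Type*} [AddGroup F]

/-- `r` is a system of representatives of the nonzero elements of `F` up to sign: every element of
`F` is exactly one of `0`, `r i` and `-r i`, which is encoded as a bijection from
`Option (ι ⊕ ι)`. -/
def IsHalfSystem (r : ι → F) : Prop :=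
  Function.Bijective (Option.elim' 0 (Sum.elim r (-r)))

lemma IsHalfSystem.injective {r : ι → F} (hr : IsHalfSystem r) : Function.Injective r :=
  fun i j hij ↦ by simpa using hr.1 (a₁ := some (.inl i)) (a₂ := some (.inl j)) hij

lemma IsHalfSystem.ne_neg {r : ι → F} (hr : IsHalfSystem r) (i j : ι) : r i ≠ -r j :=
  fun hij ↦ by simpa using hr.1 (a₁ := some (.inl i)) (a₂ := some (.inr j)) hij

lemma IsHalfSystem.ne_zero {r : ι → F} (hr : IsHalfSystem r) (i : ι) : r i ≠ 0 :=
  fun hi ↦ by simpa using hr.1 (a₁ := some (.inl i)) (a₂ := none) hi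

lemma IsHalfSystem.sum_eq [Fintype ι] [Fintype F] [AddCommMonoid K] {r : ι → F}
    (hr : IsHalfSystem r) (f : F → K) : ∑ x, f x = f 0 + ∑ i, (f (r i) + f (-r i)) := by
  rw [← hr.sum_comp f]
  simp [Fintype.sum_option, Fintype.sum_sum_type, Finset.sum_add_distrib]

/-- The matrix of the restriction of `M` to odd functions, in terms of their values on the
representatives `r i`: an odd `f` has `(M f) (r i) = ∑ j, (M (r i) (r j) - M (r i) (-r j)) f (r j)`
as soon as `M` commutes with `x ↦ -x`. -/
def oddPart [Sub K] (r : ι → F) (M : Matrix F F K) : Matrix ι ι K :=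
  of fun i j ↦ M (r i) (r j) - M (r i) (-r j)

lemma oddPart_apply [Sub K] (r : ι → F) (M : Matrix F F K) (i j : ι) :
    oddPart r M i j = M (r i) (r j) - M (r i) (-r j) := rfl

lemma oddPart_one [DecidableEq F] [DecidableEq ι] [Ring K] {r : ι → F} (hr : IsHalfSystem r) :
    oddPart r (1 : Matrix F F K) = 1 := by
  ext i j
  simp [oddPart_apply, Matrix.one_apply, hr.injective.eq_iff, hr.ne_neg i j]

theorem oddPart_mul [Fintype F] [Fintype ι] [Ring K] {r : ι → F} (hr : IsHalfSystem r)
    (M : Matrix F F K) {N : Matrix F F K} (hN : ∀ x y, N (-x) (-y) = N x y) :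
    oddPart r (M * N) = oddPart r M * oddPart r N := by
  ext i j
  have hzero : N 0 (-r j) = N 0 (r j) := by simpa using hN 0 (r j)
  have hneg (k : ι) : N (-r k) (r j) = N (r k) (-r j) := by simpa using hN (r k) (-r j)
  simp only [oddPart_apply, Matrix.mul_apply, ← Finset.sum_sub_distrib, ← mul_sub]
  rw [hr.sum_eq, hzero, sub_self, mul_zero, zero_add]
  refine Finset.sum_congr rfl fun k _ ↦ ?_
  rw [hN, hneg, sub_mul, ← neg_sub (N (r k) (r j)), mul_neg, ← sub_eq_add_neg]

end OddPart

section OddWeilRepresentation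

open scoped MatrixGroups

variable {ι F K : Type*} [Fintype ι] [DecidableEq ι] [Field F] [Fintype F] [DecidableEq F]
  [Field K] [CharZero K] {r : ι → F} {ψ : AddChar F K}

/-- The restriction of the Weil representation to odd functions, of dimension `(#F - 1) / 2`. -/
def oddWeilRepresentation (hF : ringChar F ≠ 2) (hψ : ψ.IsPrimitive) (hr : IsHalfSystem r) :
    SL(2, F) →* Matrix ι ι K where
  toFun g := oddPart r (weilRepresentation hF hψ g)
  map_one' := by rw [map_one, oddPart_one hr]
  map_mul' g h :=
    (congrArg (oddPart r) (map_mul _ g h)).trans (oddPart_mul hr _ (weilMatrix_neg_neg ψ h))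

lemma oddWeilRepresentation_apply (hF : ringChar F ≠ 2) (hψ : ψ.IsPrimitive) (hr : IsHalfSystem r)
    (g : SL(2, F)) (i j : ι) :
    oddWeilRepresentation hF hψ hr g i j =
      weilMatrix ψ g (r i) (r j) - weilMatrix ψ g (r i) (-r j) := rfl

lemma one_zero_eq_zero_of_oddWeilRepresentation_eq_one [Nontrivial ι] (hF : ringChar F ≠ 2)
    (hψ : Function.Injective ψ) (hr : IsHalfSystem r) {g : SL(2, F)}
    (hg : oddWeilRepresentation hF (addChar_isPrimitive_of_injective hψ) hr g = 1) : g 1 0 = 0 := by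
  by_contra hc
  obtain ⟨i, j, hij⟩ := exists_pair_ne ι
  have hij0 := congrFun₂ hg i j
  have hψ' := addChar_isPrimitive_of_injective hψ
  have hscalar : (gaussSum (quadraticMulChar F K) ψ)⁻¹ * quadraticMulChar F K (g 1 0) ≠ 0 :=
    mul_ne_zero (inv_ne_zero (gaussSum_quadraticMulChar_ne_zero hF hψ'))
      (left_ne_zero_of_mul_eq_one (quadraticMulChar_mul_self hc))
  rw [oddWeilRepresentation_apply, weilMatrix_apply_of_ne_zero ψ hc,
    weilMatrix_apply_of_ne_zero ψ hc, Matrix.one_apply_ne hij, sub_eq_zero,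
    mul_right_inj' hscalar, hψ.eq_iff, div_left_inj' hc] at hij0
  have hprod : 2 * 2 * r i * r j = 0 := by linear_combination -hij0
  simp [Ring.two_ne_zero hF, hr.ne_zero] at hprod

lemma eq_one_of_oddWeilRepresentation_eq_one [Nonempty ι] (hF : ringChar F ≠ 2)
    (hF' : IsSquare (-1 : F)) (hψ : Function.Injective ψ) (hr : IsHalfSystem r) {g : SL(2, F)}
    (hc : g 1 0 = 0)
    (hg : oddWeilRepresentation hF (addChar_isPrimitive_of_injective hψ) hr g = 1) : g = 1 := by
  obtain ⟨i⟩ := ‹Nonempty ι›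
  have hi := hr.ne_zero i
  have hii := congrFun₂ hg i i
  have hself : r i = g 0 0 * r i ↔ g 0 0 = 1 := by rw [eq_comm, mul_eq_right₀ hi]
  have hneg : -r i = g 0 0 * r i ↔ g 0 0 = -1 := by
    rw [← neg_one_mul, mul_left_inj' hi, eq_comm]
  have hdet : g 0 0 * g 1 1 = 1 := by simpa [hc] using (det_fin_two (g : Matrix _ _ F)).symm
  rw [oddWeilRepresentation_apply, weilMatrix_apply_of_eq_zero ψ hc,
    weilMatrix_apply_of_eq_zero ψ hc, Matrix.one_apply_eq] at hii
  simp only [hself, hneg] at hii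
  rcases eq_or_ne (g 0 0) 1 with ha | ha
  · have hexp : ψ (g 0 1 * r i ^ 2) = ψ 0 := by
      simpa [ha, Ring.neg_one_ne_one_of_char_ne_two hF |>.symm] using hii
    have hb : g 0 1 = 0 := by simpa [hi] using hψ hexp
    have hd : g 1 1 = 1 := by simpa [ha] using hdet
    ext i j
    fin_cases i <;> fin_cases j <;> simp [ha, hb, hc, hd]
  rcases eq_or_ne (g 0 0) (-1) with ha' | ha'
  · refine absurd ?_ (addChar_ne_neg_one_of_injective hF hψ (g 0 0 * g 0 1 * r i ^ 2))
    rw [if_neg ha, if_pos ha', ha', quadraticMulChar_neg_one hF', one_mul, zero_sub] at hii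
    rw [ha', ← hii, neg_neg]
  · simp [ha, ha'] at hii

theorem oddWeilRepresentation_injective [Nontrivial ι] (hF : ringChar F ≠ 2)
    (hF' : IsSquare (-1 : F)) (hψ : Function.Injective ψ) (hr : IsHalfSystem r) :
    Function.Injective (oddWeilRepresentation hF (addChar_isPrimitive_of_injective hψ) hr) := by
  rw [injective_iff_map_eq_one]
  exact fun g hg ↦ eq_one_of_oddWeilRepresentation_eq_one hF hF' hψ hr
    (one_zero_eq_zero_of_oddWeilRepresentation_eq_one hF hψ hr hg) hg

end OddWeilRepresentation

section BinaryIcosahedral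

open scoped MatrixGroups

instance fact_prime_five : Fact (Nat.Prime 5) := ⟨Nat.prime_five⟩

/-- The element of `SL₂(𝔽₅)` that `icosahedralRep` maps to `alpha`. -/
def alphaLift : SL(2, ZMod 5) := ⟨!![-1, 2; 0, -1], by decide⟩

/-- The element of `SL₂(𝔽₅)` that `icosahedralRep` maps to `beta`. -/
def betaLift : SL(2, ZMod 5) := ⟨!![2, 0; 0, -2], by decide⟩

lemma upperUnipotent_eq_alphaLift_pow (b : ZMod 5) :
    upperUnipotent b = alphaLift ^ (2 * b.val) := by
  revert b
  decide

theorem closure_alphaLift_betaLift_weyl :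
    Subgroup.closure {alphaLift, betaLift, weyl (ZMod 5)} = ⊤ := by
  refine eq_top_iff.2 fun g _ ↦ ?_
  induction g using upperUnipotent_weyl_induction with
  | upperUnipotent b =>
    rw [upperUnipotent_eq_alphaLift_pow]
    exact pow_mem (Subgroup.subset_closure (by simp)) _
  | weyl => exact Subgroup.subset_closure (by simp)
  | mul g h hg hh => exact mul_mem (hg trivial) (hh trivial)

lemma isPrimitiveRoot_zeta5 : IsPrimitiveRoot zeta5 5 := by
  simpa [zeta5] using Complex.isPrimitiveRoot_exp 5 (by norm_num)

/-- The additive character of `𝔽₅` with value `ζ₅` at `1`, to which the Weil representation is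
attached. -/
def zeta5Char : AddChar (ZMod 5) ℂ := AddChar.zmodChar 5 isPrimitiveRoot_zeta5.pow_eq_one

lemma zeta5Char_eq_pow {a : ZMod 5} {n : ℕ} (ha : a = n) : zeta5Char a = zeta5 ^ n := by
  rw [ha, zeta5Char, AddChar.zmodChar_apply']

lemma zeta5Char_one : zeta5Char 1 = zeta5 := (zeta5Char_eq_pow (n := 1) rfl).trans (pow_one _)

lemma zeta5Char_two : zeta5Char 2 = zeta5 ^ 2 := zeta5Char_eq_pow rfl

lemma zeta5Char_neg_two : zeta5Char (-2) = zeta5 ^ 3 := zeta5Char_eq_pow rfl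

lemma zeta5Char_neg_one : zeta5Char (-1) = zeta5 ^ 4 := zeta5Char_eq_pow rfl

lemma zeta5Char_injective : Function.Injective zeta5Char := fun a b hab ↦
  ZMod.val_injective 5 (isPrimitiveRoot_zeta5.pow_inj a.val_lt b.val_lt hab)

lemma inv_zeta5 : zeta5⁻¹ = zeta5 ^ 4 :=
  inv_eq_of_mul_eq_one_right (by rw [← pow_succ', isPrimitiveRoot_zeta5.pow_eq_one])

lemma isHalfSystem_one_neg_two : IsHalfSystem ![(1 : ZMod 5), -2] := by
  unfold IsHalfSystem
  decide

lemma ringChar_zmod_five_ne_two : ringChar (ZMod 5) ≠ 2 := by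
  rw [ZMod.ringChar_zmod_n]
  norm_num

lemma isSquare_neg_one_zmod_five : IsSquare (-1 : ZMod 5) := ⟨2, by decide⟩

lemma quadraticMulChar_two_zmod_five : quadraticMulChar (ZMod 5) ℂ 2 = -1 := by
  rw [quadraticMulChar_apply, quadraticChar_neg_one_iff_not_isSquare.2 (by decide), Int.cast_neg,
    Int.cast_one]

lemma quadraticMulChar_neg_two_zmod_five : quadraticMulChar (ZMod 5) ℂ (-2) = -1 := by
  rw [← neg_one_mul, map_mul, quadraticMulChar_neg_one isSquare_neg_one_zmod_five, one_mul,
    quadraticMulChar_two_zmod_five]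

lemma gaussSum_zeta5Char : gaussSum (quadraticMulChar (ZMod 5) ℂ) zeta5Char =
    zeta5 - zeta5 ^ 2 - zeta5 ^ 3 + zeta5 ^ 4 := by
  rw [gaussSum, isHalfSystem_one_neg_two.sum_eq]
  simp only [Fin.sum_univ_two, cons_val_zero, cons_val_one, neg_neg, MulChar.map_zero, map_one,
    zeta5Char_one, zeta5Char_two, zeta5Char_neg_one, zeta5Char_neg_two,
    quadraticMulChar_two_zmod_five, quadraticMulChar_neg_two_zmod_five,
    quadraticMulChar_neg_one isSquare_neg_one_zmod_five]
  ring

/-- The odd Weil representation of `SL₂(𝔽₅)`, which identifies this group with `Ibar`. The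
representatives `1, -2` of `𝔽₅ˣ` up to sign are chosen such that the Weyl element maps to `gamma`;
with `1, 2` its off-diagonal entries would change sign. -/
def icosahedralRep : SL(2, ZMod 5) →* GL (Fin 2) ℂ :=
  (oddWeilRepresentation ringChar_zmod_five_ne_two
    (addChar_isPrimitive_of_injective zeta5Char_injective) isHalfSystem_one_neg_two).toHomUnits

lemma icosahedralRep_injective : Function.Injective icosahedralRep := fun _ _ hgh ↦
  oddWeilRepresentation_injective ringChar_zmod_five_ne_two isSquare_neg_one_zmod_five
    zeta5Char_injective isHalfSystem_one_neg_two (congrArg Units.val hgh)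

lemma coe_icosahedralRep (g : SL(2, ZMod 5)) :
    (icosahedralRep g : Matrix (Fin 2) (Fin 2) ℂ) =
      !![weilMatrix zeta5Char g 1 1 - weilMatrix zeta5Char g 1 (-1),
          weilMatrix zeta5Char g 1 (-2) - weilMatrix zeta5Char g 1 2;
        weilMatrix zeta5Char g (-2) 1 - weilMatrix zeta5Char g (-2) (-1),
          weilMatrix zeta5Char g (-2) (-2) - weilMatrix zeta5Char g (-2) 2] :=
  eta_fin_two _

lemma coe_icosahedralRep_alphaLift :
    (icosahedralRep alphaLift : Matrix (Fin 2) (Fin 2) ℂ) = alpha := by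
  have htwo : (-(2 * 2 ^ 2) : ZMod 5) = 2 := rfl
  rw [coe_icosahedralRep]
  simp +decide [weilMatrix, alphaLift, alpha, htwo, zeta5Char_two, zeta5Char_neg_two,
    quadraticMulChar_neg_one isSquare_neg_one_zmod_five]

lemma coe_icosahedralRep_betaLift :
    (icosahedralRep betaLift : Matrix (Fin 2) (Fin 2) ℂ) = beta := by
  rw [coe_icosahedralRep]
  simp +decide [weilMatrix, betaLift, beta, quadraticMulChar_two_zmod_five]

lemma inv_gaussSum_zeta5Char_mul :
    (gaussSum (quadraticMulChar (ZMod 5) ℂ) zeta5Char)⁻¹ * (zeta5 ^ 4 - zeta5) =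
      (zeta5 ^ 2 - zeta5 ^ 3)⁻¹ := by
  have hprod : (zeta5 ^ 4 - zeta5) * (zeta5 ^ 2 - zeta5 ^ 3) =
      gaussSum (quadraticMulChar (ZMod 5) ℂ) zeta5Char := by
    rw [gaussSum_zeta5Char]
    linear_combination (zeta5 - zeta5 ^ 2) * isPrimitiveRoot_zeta5.pow_eq_one
  refine eq_inv_of_mul_eq_one_left ?_
  rw [mul_assoc, hprod]
  exact inv_mul_cancel₀ (gaussSum_quadraticMulChar_ne_zero ringChar_zmod_five_ne_two
    (addChar_isPrimitive_of_injective zeta5Char_injective))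

lemma coe_icosahedralRep_weyl :
    (icosahedralRep (weyl (ZMod 5)) : Matrix (Fin 2) (Fin 2) ℂ) = gamma := by
  have hkernel : (icosahedralRep (weyl (ZMod 5)) : Matrix (Fin 2) (Fin 2) ℂ) =
      (gaussSum (quadraticMulChar (ZMod 5) ℂ) zeta5Char)⁻¹ •
        !![zeta5 ^ 3 - zeta5 ^ 2, zeta5 ^ 4 - zeta5;
          zeta5 ^ 4 - zeta5, zeta5 ^ 2 - zeta5 ^ 3] := by
    have hfour : (2 * 2 : ZMod 5) = -1 := rfl
    simp [coe_icosahedralRep, weilMatrix_weyl_apply, hfour, zeta5Char_one, zeta5Char_two,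
      zeta5Char_neg_one, zeta5Char_neg_two, ← mul_sub]
  have hfactor : zeta5 ^ 3 - zeta5 ^ 2 = (zeta5 ^ 4 - zeta5) * (zeta5 + zeta5⁻¹) := by
    rw [inv_zeta5]
    linear_combination -zeta5 ^ 3 * isPrimitiveRoot_zeta5.pow_eq_one
  rw [hkernel, gamma, ← inv_gaussSum_zeta5Char_mul, mul_smul, ← neg_sub (zeta5 ^ 3), hfactor]
  congr 1
  simp only [smul_of, smul_cons, smul_empty, smul_eq_mul, mul_one, mul_neg]

theorem range_icosahedralRep : icosahedralRep.range = Ibar := by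
  rw [MonoidHom.range_eq_map, ← closure_alphaLift_betaLift_weyl, MonoidHom.map_closure, Ibar]
  congr 1
  ext g
  simp only [Set.image_insert_eq, Set.image_singleton, Set.mem_insert_iff, Set.mem_singleton_iff,
    Set.mem_ofPred_eq, ← coe_icosahedralRep_alphaLift, ← coe_icosahedralRep_betaLift,
    ← coe_icosahedralRep_weyl, Units.val_inj]

/-- The isomorphism inverse to `icosahedralRep`. -/
def ibarEquiv : Ibar ≃* SL(2, ZMod 5) :=
  ((MonoidHom.ofInjective icosahedralRep_injective).trans
    (MulEquiv.subgroupCongr range_icosahedralRep)).symm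

lemma card_specialLinearGroup_two_zmod_five : Nat.card SL(2, ZMod 5) = 120 := by
  rw [Nat.card_eq_fintype_card]
  decide +kernel

end BinaryIcosahedral

theorem stmt0 :
    Finite Ibar ∧
    Nonempty (Ibar ≃* Matrix.SpecialLinearGroup (Fin 2) (ZMod 5)) ∧
    Nat.card Ibar = 120 := by
  refine ⟨.of_equiv _ ibarEquiv.symm.toEquiv, ⟨ibarEquiv⟩, ?_⟩
  rw [Nat.card_congr ibarEquiv.toEquiv, card_specialLinearGroup_two_zmod_five]
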